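/- Under the Bayesian bandit setup, let 0 ≤ ε ≤ 1 and let π be the mixed sampling distribution π(a) = (1−ε) α(a) + ε/|K| for a ∈ K. Then the expected instantaneous regret of sampling from π satisfies ∑_{a∈K} π(a) (E[Y_{A*}] − E[Y_a]) ≤ ε + (1−ε) · √(1/2) · ∑_{a∈K} α(a) √(d(a,a)). -/

import Mathlib

/-!
Averaging over the value of `A*` gives `E[Y_{A*}] = ∑ a, α a * E[Y_a | A* = a]`. Splitting `π` into
its two components, the uniform one contributes at most `ε` because the rewards lie in `[0,1]`, and
the other contributes `(1 - ε) ∑ a, α a * (E[Y_a | A* = a] - E[Y_a])`. Each difference of means is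
at most `√(D / 2)`, where `D` is the divergence between the two laws of `Y_a`: this is Pinsker's
inequality for the means of `[0,1]`-valued variables (`two_mul_sq_le_integral_llr`). It follows by
combining Gibbs' inequality for the exponentially tilted measure (the Donsker-Varadhan bound) with
Hoeffding's lemma.
-/

open MeasureTheory ENNReal Classical Finset ProbabilityTheory

/-- The Kullback–Leibler divergence `D(μ‖ν)` of `μ` with respect to `ν`:
`∫ log (dμ/dν) dμ` when `μ ≪ ν` (and the integrand is integrable; for
probability measures non-integrability means the divergence is `+∞`), and `+∞`
when `μ` is not absolutely continuous with respect to `ν`. -/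
noncomputable def klDiv {Ω : Type*} [MeasurableSpace Ω] (μ ν : Measure Ω) : ℝ≥0∞ :=
  if μ ≪ ν ∧ Integrable (fun ω => Real.log (μ.rnDeriv ν ω).toReal) μ then
    ENNReal.ofReal (∫ ω, Real.log (μ.rnDeriv ν ω).toReal ∂μ)
  else ⊤

/-- Donsker-Varadhan inequality: for probability measures `μ ≪ ν`, the mean of `f` under `μ` is at
most the divergence of `μ` from `ν` plus the log-moment of `f` under `ν`. -/
lemma integral_le_integral_llr_add_log {X : Type*} [MeasurableSpace X] {μ ν : Measure X}
    [IsProbabilityMeasure μ] [IsProbabilityMeasure ν] {f : X → ℝ} (hμν : μ ≪ ν)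
    (h_int : Integrable (llr μ ν) μ) (hfμ : Integrable f μ)
    (hfν : Integrable (fun x => Real.exp (f x)) ν) :
    ∫ x, f x ∂μ ≤ ∫ x, llr μ ν x ∂μ + Real.log (∫ x, Real.exp (f x) ∂ν) := by
  have : IsProbabilityMeasure (ν.tilted f) := isProbabilityMeasure_tilted hfν
  have hac : μ ≪ ν.tilted f := hμν.trans (absolutelyContinuous_tilted hfν)
  have h0 := InformationTheory.integral_llr_add_sub_measure_univ_nonneg hac
    (integrable_llr_tilted_right hμν hfμ h_int hfν)
  rw [integral_llr_tilted_right hμν hfμ hfν h_int] at h0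
  simp only [probReal_univ] at h0
  linarith

/-- Pinsker's inequality for the means of two laws carried by `[0,1]`. -/
lemma two_mul_sq_le_integral_llr {μ ν : Measure ℝ}
    [IsProbabilityMeasure μ] [IsProbabilityMeasure ν] (hμν : μ ≪ ν)
    (h_int : Integrable (llr μ ν) μ) (hν : ∀ᵐ x ∂ν, x ∈ Set.Icc (0 : ℝ) 1) :
    2 * (∫ x, x ∂μ - ∫ x, x ∂ν) ^ 2 ≤ ∫ x, llr μ ν x ∂μ := by
  set δ := ∫ x, x ∂μ - ∫ x, x ∂ν with hδ
  have hsub := hasSubgaussianMGF_of_mem_Icc (X := fun x : ℝ => x) aemeasurable_id hν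
  have hiμ : Integrable (fun x : ℝ => x) μ :=
    Integrable.of_mem_Icc 0 1 aemeasurable_id (hμν.ae_le hν)
  -- `t = 4 * δ` maximizes `t * δ - t ^ 2 / 8`.
  have hdv := integral_le_integral_llr_add_log (f := fun x => (4 * δ) * (x - ∫ y, y ∂ν)) hμν h_int
    ((hiμ.sub (integrable_const _)).const_mul _) (hsub.integrable_exp_mul (4 * δ))
  have hmean : ∫ x, (4 * δ) * (x - ∫ y, y ∂ν) ∂μ = 4 * δ * δ := by
    rw [integral_const_mul, integral_sub hiμ (integrable_const _)]
    simp [hδ]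
  have hlog : Real.log (∫ x, Real.exp ((4 * δ) * (x - ∫ y, y ∂ν)) ∂ν) ≤ 2 * δ ^ 2 := by
    have h1 := hsub.mgf_le (4 * δ)
    have h2 := Real.log_le_log (integral_exp_pos (hsub.integrable_exp_mul (4 * δ))) h1
    rw [Real.log_exp] at h2
    refine h2.trans (le_of_eq ?_)
    simp
    ring
  rw [hmean] at hdv
  nlinarith

/-- Pinsker's inequality for means, extended to an infinite divergence. The positive part taken by
`ENNReal.ofReal` on the left loses nothing, as the right-hand side is nonnegative. -/
lemma ofReal_sub_le_klDiv_rpow {μ ν : Measure ℝ}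
    [IsProbabilityMeasure μ] [IsProbabilityMeasure ν] (hν : ∀ᵐ x ∂ν, x ∈ Set.Icc (0 : ℝ) 1) :
    ENNReal.ofReal (∫ x, x ∂μ - ∫ x, x ∂ν) ≤
      ENNReal.ofReal (Real.sqrt (1 / 2)) * (klDiv μ ν) ^ (1 / 2 : ℝ) := by
  unfold klDiv
  split_ifs with h
  · have hp := two_mul_sq_le_integral_llr h.1 h.2 hν
    change _ ≤ _ * (ENNReal.ofReal (∫ x, llr μ ν x ∂μ)) ^ (1 / 2 : ℝ)
    have h0 : 0 ≤ ∫ x, llr μ ν x ∂μ := le_trans (by positivity) hp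
    rw [ENNReal.ofReal_rpow_of_nonneg h0 (by norm_num), ← Real.sqrt_eq_rpow,
      ← ENNReal.ofReal_mul (Real.sqrt_nonneg _), ← Real.sqrt_mul (by norm_num)]
    exact ENNReal.ofReal_le_ofReal (Real.le_sqrt_of_sq_le (by linarith))
  · rw [ENNReal.top_rpow_of_pos (by norm_num), ENNReal.mul_top]
    · exact le_top
    · simp

lemma ofReal_sum_le_sum_ofReal {ι : Type*} (s : Finset ι) (f : ι → ℝ) :
    ENNReal.ofReal (∑ i ∈ s, f i) ≤ ∑ i ∈ s, ENNReal.ofReal (f i) :=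
  Finset.le_sum_of_subadditive _ ENNReal.ofReal_zero.le (fun _ _ => ENNReal.ofReal_add_le) s f

/-- Law of total expectation for a reward selected by a finitely-valued random index. -/
lemma integral_select_eq_sum {Ω : Type*} [MeasurableSpace Ω] (P : Measure Ω)
    [IsProbabilityMeasure P] {K : Type*} [Fintype K] [MeasurableSpace K]
    [MeasurableSingletonClass K] {A : Ω → K} (hA : Measurable A) {Y : K → Ω → ℝ}
    (hint : Integrable (fun ω => Y (A ω) ω) P) :
    ∫ ω, Y (A ω) ω ∂P =
      ∑ a, (P {ω | A ω = a}).toReal * ∫ ω, Y a ω ∂(P[|{ω | A ω = a}]) := by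
  have hm : ∀ a, MeasurableSet {ω | A ω = a} := fun a => hA (measurableSet_singleton a)
  have hsum : ∑ a, P {ω | A ω = a} • P[|{ω | A ω = a}] = P := sum_meas_smul_cond_fiber hA P
  have hle : ∀ a ∈ Finset.univ,
      Integrable (fun ω => Y (A ω) ω) (P {ω | A ω = a} • P[|{ω | A ω = a}]) := by
    rw [← integrable_finsetSum_measure, hsum]
    exact hint
  conv_lhs => rw [← hsum]
  rw [integral_finsetSum_measure hle]
  refine Finset.sum_congr rfl fun a _ => ?_
  rw [integral_smul_measure, smul_eq_mul]
  congr 1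
  refine integral_congr_ae ?_
  filter_upwards [ae_cond_mem (hm a)] with ω hω
  have : A ω = a := hω
  simp only [this]

/-- Expected instantaneous regret bound for the mixed sampling distribution
`π a = (1−ε) α a + ε/|K|` (TS-U):
`∑ a, π a * (E[Y_{A*}] − E[Y_a]) ≤ ε + (1−ε) √(1/2) ∑ a, α a √(d(a,a))`
where `α a = P(A* = a)` and `d(a,a*)` is the KL divergence between the law of
`Y_a` under `P(·|A* = a*)` and its law under `P`. -/
theorem stmt11 {Ω : Type*} [MeasurableSpace Ω] (P : Measure Ω) [IsProbabilityMeasure P]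
    {K : Type*} [Fintype K] [Nonempty K] [MeasurableSpace K] [MeasurableSingletonClass K]
    (Astar : Ω → K) (hA : Measurable Astar)
    (hα : ∀ a, 0 < P {ω | Astar ω = a})
    (Y : K → Ω → ℝ) (hY : ∀ a, Measurable (Y a))
    (hY0 : ∀ a ω, 0 ≤ Y a ω) (hY1 : ∀ a ω, Y a ω ≤ 1)
    (ε : ℝ) (hε0 : 0 ≤ ε) (hε1 : ε ≤ 1)
    (α : K → ℝ) (hαdef : ∀ a, α a = (P {ω | Astar ω = a}).toReal)
    (π : K → ℝ) (hπdef : ∀ a, π a = (1 - ε) * α a + ε / (Fintype.card K : ℝ))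
    (d : K → K → ℝ≥0∞)
    (hddef : ∀ a astar, d a astar =
      klDiv (Measure.map (Y a) (P[|{ω | Astar ω = astar}])) (Measure.map (Y a) P)) :
    ENNReal.ofReal (∑ a, π a * ((∫ ω, Y (Astar ω) ω ∂P) - ∫ ω, Y a ω ∂P)) ≤
      ENNReal.ofReal ε + ENNReal.ofReal ((1 - ε) * Real.sqrt (1/2)) *
        ∑ a, ENNReal.ofReal (α a) * (d a a) ^ (1/2 : ℝ) := by
  have hY_meas : Measurable (fun ω => Y (Astar ω) ω) :=
    (measurable_from_prod_countable_right (f := fun p : K × Ω => Y p.1 p.2) hY).comp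
      (hA.prodMk measurable_id)
  have hS_int : Integrable (fun ω => Y (Astar ω) ω) P :=
    Integrable.of_mem_Icc 0 1 hY_meas.aemeasurable (ae_of_all _ fun ω => ⟨hY0 _ _, hY1 _ _⟩)
  set S := ∫ ω, Y (Astar ω) ω ∂P with hS
  set m : K → ℝ := fun a => ∫ ω, Y a ω ∂P with hm
  set c : K → ℝ := fun a => ∫ ω, Y a ω ∂(P[|{ω | Astar ω = a}]) with hc
  have hα0 : ∀ a, 0 ≤ α a := fun a => by rw [hαdef]; exact ENNReal.toReal_nonneg
  have hSsum : S = ∑ a, α a * c a := by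
    rw [hS, integral_select_eq_sum P hA hS_int]
    exact Finset.sum_congr rfl fun a _ => by rw [hαdef]
  have hαsum : ∑ a, α a = 1 := by
    -- The law of total expectation, applied to the constant reward `1`.
    have h := integral_select_eq_sum P hA (Y := fun _ _ => (1 : ℝ)) (integrable_const _)
    have hp : ∀ a, IsProbabilityMeasure (P[|{ω | Astar ω = a}]) := fun a =>
      cond_isProbabilityMeasure (hα a).ne'
    simp only [integral_const, probReal_univ, smul_eq_mul, mul_one] at h
    simp only [hαdef, ← h]
  have hS1 : S ≤ 1 := by
    have := integral_mono hS_int (integrable_const (1 : ℝ)) (fun ω => hY1 (Astar ω) ω)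
    simpa using this
  have hm0 : ∀ a, 0 ≤ m a := fun a => integral_nonneg (hY0 a)
  have hcard : (0 : ℝ) < Fintype.card K := by exact_mod_cast Fintype.card_pos
  have hreg : ∑ a, π a * (S - m a) ≤ ε + (1 - ε) * ∑ a, α a * (c a - m a) := by
    have h1 : ∑ a, π a * (S - m a) =
        (1 - ε) * (S * ∑ a, α a - ∑ a, α a * m a) + ∑ a, ε / (Fintype.card K : ℝ) * (S - m a) := by
      rw [Finset.mul_sum, ← Finset.sum_sub_distrib, Finset.mul_sum, ← Finset.sum_add_distrib]
      exact Finset.sum_congr rfl fun a _ => by rw [hπdef]; ring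
    have h2 : ∑ a, ε / (Fintype.card K : ℝ) * (S - m a) ≤ ε := by
      calc _ ≤ ∑ a : K, ε / (Fintype.card K : ℝ) :=
            Finset.sum_le_sum fun a _ =>
              mul_le_of_le_one_right (div_nonneg hε0 hcard.le) (by linarith [hm0 a])
        _ = ε := by simp; field_simp
    have h3 : ∑ a, α a * (c a - m a) = S - ∑ a, α a * m a := by
      rw [hSsum, ← Finset.sum_sub_distrib]
      exact Finset.sum_congr rfl fun a _ => by ring
    rw [h1, h3, hαsum, mul_one]
    linarith
  have hpin : ∀ a, ENNReal.ofReal (c a - m a) ≤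
      ENNReal.ofReal (Real.sqrt (1 / 2)) * (d a a) ^ (1 / 2 : ℝ) := by
    intro a
    have : IsProbabilityMeasure (P[|{ω | Astar ω = a}]) := cond_isProbabilityMeasure (hα a).ne'
    have := Measure.isProbabilityMeasure_map (μ := P) (hY a).aemeasurable
    have := Measure.isProbabilityMeasure_map (μ := P[|{ω | Astar ω = a}]) (hY a).aemeasurable
    have h := ofReal_sub_le_klDiv_rpow (μ := Measure.map (Y a) (P[|{ω | Astar ω = a}]))
      (ν := Measure.map (Y a) P) (by
        refine (ae_map_iff (hY a).aemeasurable measurableSet_Icc).2 ?_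
        exact ae_of_all _ fun ω => ⟨hY0 a ω, hY1 a ω⟩)
    have hmap : ∀ Q : Measure Ω, ∫ x, x ∂(Measure.map (Y a) Q) = ∫ ω, Y a ω ∂Q := fun Q =>
      integral_map (hY a).aemeasurable aestronglyMeasurable_id
    rw [hmap, hmap] at h
    rw [hddef]
    exact h
  have hε' : 0 ≤ 1 - ε := by linarith
  calc ENNReal.ofReal (∑ a, π a * (S - m a))
      ≤ ENNReal.ofReal ε + ENNReal.ofReal ((1 - ε) * ∑ a, α a * (c a - m a)) :=
        (ENNReal.ofReal_le_ofReal hreg).trans ENNReal.ofReal_add_le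
    _ ≤ ENNReal.ofReal ε + ENNReal.ofReal (1 - ε) *
          ∑ a, ENNReal.ofReal (α a) *
            (ENNReal.ofReal (Real.sqrt (1 / 2)) * (d a a) ^ (1 / 2 : ℝ)) := by
        rw [ENNReal.ofReal_mul hε']
        gcongr
        refine (ofReal_sum_le_sum_ofReal _ _).trans (Finset.sum_le_sum fun a _ => ?_)
        rw [ENNReal.ofReal_mul (hα0 a)]
        gcongr
        exact hpin a
    _ = _ := by
        rw [ENNReal.ofReal_mul hε', mul_assoc, Finset.mul_sum (a := ENNReal.ofReal √(1 / 2))]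
        simp only [mul_left_comm]
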